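/- Let u^c < 0, let 𝒰 be an open complex neighborhood of u^c, let f, Q, U be analytic on 𝒰 with f real on 𝒰 ∩ ℝ, f(u^c) = 0 and f'(u^c) > 0, and let P^∞ be the outside parametrix with endpoint u^c. Define Δ^(1)(λ) = i Q(λ)(−f(λ))^{−1/2} P^∞(λ) σ₃ P^∞(λ)^{−1}, Δ^(2)(λ) = −(1/2)(−f(λ))^{−1} P^∞(λ) [[Q(λ)², U(λ)], [U(λ), Q(λ)²]] P^∞(λ)^{−1}, and R^(1)(λ) = (λ − u^c)^{−1}·Res(Δ^(1); u^c) − Δ^(1)(λ). Then P^∞(λ) σ₁ P^∞(λ)^{−1} = σ₃, the function R^(1) Δ^(1) + Δ^(2) extends meromorphically to a neighborhood of u^c with at most a simple pole at u^c, and Res(R^(1)Δ^(1) + Δ^(2); u^c) = ((U(u^c) + Q(u^c)²)/(2 f'(u^c))) σ₃. -/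

import Mathlib

open Filter Topology Set Matrix

/-- The outside parametrix with endpoint `u^c`, principal branches. -/
noncomputable def Pinf (uc : ℝ) (lam : ℂ) : Matrix (Fin 2) (Fin 2) ℂ :=
  ((-lam) ^ ((1 : ℂ) / 4)) •
    (Matrix.of ![![((uc : ℂ) - lam) ^ (-(1 / 4) : ℂ), 0],
                 ![0, ((uc : ℂ) - lam) ^ ((1 : ℂ) / 4)]] *
     Matrix.of ![![1, 1], ![Complex.I, -Complex.I]])

/-- The Pauli matrix `σ₁`. -/
def sigma1 : Matrix (Fin 2) (Fin 2) ℂ := Matrix.of ![![0, 1], ![1, 0]]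

/-- The Pauli matrix `σ₃`. -/
def sigma3 : Matrix (Fin 2) (Fin 2) ℂ := Matrix.of ![![1, 0], ![0, -1]]

/-- The elementary matrix `E₁₂`. -/
def E12 : Matrix (Fin 2) (Fin 2) ℂ := Matrix.of ![![0, 1], ![0, 0]]

/-- `Δ^{(1)}(λ) = i Q(λ)(−f(λ))^{−1/2} P^∞(λ) σ₃ P^∞(λ)⁻¹`. -/
noncomputable def Delta1 (uc : ℝ) (f Q : ℂ → ℂ) (lam : ℂ) : Matrix (Fin 2) (Fin 2) ℂ :=
  (Complex.I * Q lam * (-(f lam)) ^ (-(1 / 2) : ℂ)) •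
    (Pinf uc lam * sigma3 * (Pinf uc lam)⁻¹)

/-- `Δ^{(2)}(λ) = −(1/2)(−f(λ))^{−1} P^∞(λ) [[Q², U],[U, Q²]] P^∞(λ)⁻¹`. -/
noncomputable def Delta2 (uc : ℝ) (f Q U : ℂ → ℂ) (lam : ℂ) : Matrix (Fin 2) (Fin 2) ℂ :=
  (-(1 / 2 : ℂ) * (-(f lam))⁻¹) •
    (Pinf uc lam * Matrix.of ![![Q lam ^ 2, U lam], ![U lam, Q lam ^ 2]] *
      (Pinf uc lam)⁻¹)

/-- `R^{(1)}(λ) = (λ − u^c)⁻¹ Res(Δ^{(1)}; u^c) − Δ^{(1)}(λ)`, where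
`Res(Δ^{(1)}; u^c) = −Q(u^c) f'(u^c)^{−1/2} E₁₂`. -/
noncomputable def R1 (uc : ℝ) (f Q : ℂ → ℂ) (lam : ℂ) : Matrix (Fin 2) (Fin 2) ℂ :=
  (lam - (uc : ℂ))⁻¹ • ((-(Q (uc : ℂ)) * (deriv f (uc : ℂ)) ^ (-(1 / 2) : ℂ)) • E12)
    - Delta1 uc f Q lam

open Complex in
/-- If `g` lies in the right half-plane, `z` off the negative axis, and multiplication by `g` does
not move `z` across the real axis, then powers with principal branches are multiplicative. -/
lemma mul_cpow_of_im_sign {z g : ℂ} (hz : z ∈ slitPlane) (hg : 0 < g.re)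
    (hpos : 0 < z.im → 0 < (z * g).im) (hneg : z.im < 0 → (z * g).im < 0) (w : ℂ) :
    (z * g) ^ w = z ^ w * g ^ w := by
  have hz0 : z ≠ 0 := slitPlane_ne_zero hz
  have hg0 : g ≠ 0 := by
    rintro rfl
    simp at hg
  have him : (z * g).im = ‖z‖ * ‖g‖ * Real.sin (arg z + arg g) := by
    rw [Real.sin_add, mul_im, ← norm_mul_sin_arg z, ← norm_mul_sin_arg g, ← norm_mul_cos_arg z,
      ← norm_mul_cos_arg g]
    ring
  have hn : 0 < ‖z‖ * ‖g‖ := mul_pos (norm_pos_iff.2 hz0) (norm_pos_iff.2 hg0)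
  obtain ⟨hg1, hg2⟩ := abs_lt.1 (abs_arg_lt_pi_div_two_iff.2 (Or.inl hg))
  have hpi := Real.pi_pos
  have harg : arg z + arg g ∈ Set.Ioc (-Real.pi) Real.pi := by
    have h1 := neg_pi_lt_arg z
    have h2 := arg_le_pi z
    rcases lt_trichotomy z.im 0 with h | h | h
    · have hz3 := arg_neg_iff.2 h
      have hs := hneg h
      rw [him] at hs
      refine ⟨?_, by linarith⟩
      by_contra! hle
      have := Real.sin_nonpos_of_nonpos_of_neg_pi_le (x := arg z + arg g + Real.pi)
        (by linarith) (by linarith)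
      rw [Real.sin_add_pi] at this
      nlinarith
    · have hz3 : arg z = 0 := by
        rw [arg_eq_zero_iff]
        rcases hz with hz | hz
        · exact ⟨hz.le, h⟩
        · exact absurd h hz
      rw [hz3]
      constructor <;> linarith
    · have hz3 : 0 ≤ arg z := arg_nonneg_iff.2 h.le
      have hs := hpos h
      rw [him] at hs
      refine ⟨by linarith, ?_⟩
      by_contra! hle
      have := Real.sin_nonneg_of_nonneg_of_le_pi (x := arg z + arg g - Real.pi)
        (by linarith) (by linarith)
      rw [Real.sin_sub_pi] at this
      nlinarith
  rw [cpow_def_of_ne_zero (mul_ne_zero hz0 hg0), cpow_def_of_ne_zero hz0,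
    cpow_def_of_ne_zero hg0, log_mul hz0 hg0 harg, add_mul, Complex.exp_add]

/-- An analytic function that is real on the real axis, with positive derivative at a real point,
locally preserves the sign of the imaginary part. -/
lemma eventually_im_sign_of_real {f : ℂ → ℂ} {x₀ : ℝ} (hf : AnalyticAt ℂ f x₀)
    (hreal : ∀ᶠ z : ℂ in 𝓝 (x₀ : ℂ), (f (z.re : ℂ)).im = 0)
    (him : (deriv f (x₀ : ℂ)).im = 0) (hpos : 0 < (deriv f (x₀ : ℂ)).re) :
    ∀ᶠ z in 𝓝 (x₀ : ℂ), (0 < z.im → 0 < (f z).im) ∧ (z.im < 0 → (f z).im < 0) := by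
  have hs := hf.hasStrictDerivAt.hasStrictFDerivAt.isLittleO.def
    (show 0 < (deriv f (x₀ : ℂ)).re / 2 by linarith)
  have ht : Tendsto (fun z : ℂ => (z, ((z.re : ℝ) : ℂ))) (𝓝 (x₀ : ℂ)) (𝓝 ((x₀ : ℂ), (x₀ : ℂ))) := by
    have hc : Continuous fun z : ℂ => (z, ((z.re : ℝ) : ℂ)) := by fun_prop
    simpa using hc.tendsto (x₀ : ℂ)
  filter_upwards [ht.eventually hs, hreal] with z hz hr
  have hsub : z - (z.re : ℂ) = z.im * Complex.I := by
    apply Complex.ext <;> simp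
  simp only [hsub, ContinuousLinearMap.toSpanSingleton_apply, smul_eq_mul, norm_mul,
    Complex.norm_I, mul_one, Complex.norm_real, Real.norm_eq_abs] at hz
  have hb := (Complex.abs_im_le_norm _).trans hz
  simp only [Complex.sub_im, hr, Complex.mul_im, Complex.mul_re, Complex.ofReal_re,
    Complex.ofReal_im, Complex.I_re, Complex.I_im, him] at hb
  constructor <;> intro h
  · rw [abs_of_pos h] at hb
    nlinarith [(abs_le.1 hb).1]
  · rw [abs_of_neg h] at hb
    nlinarith [(abs_le.1 hb).2]

lemma mul_mul_inv_eq_of_intertwine {A M B : Matrix (Fin 2) (Fin 2) ℂ} (hA : IsUnit A.det)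
    (h : A * M = B * A) : A * M * A⁻¹ = B := by
  rw [h, Matrix.mul_nonsing_inv_cancel_right _ _ hA]

lemma cpow_neg_quarter_mul {z : ℂ} (hz : z ≠ 0) :
    z ^ (-(1 / 4) : ℂ) * z ^ ((1 : ℂ) / 4) = 1 := by
  rw [← Complex.cpow_add _ _ hz]
  norm_num

lemma isUnit_det_Pinf {uc : ℝ} {lam : ℂ} (h0 : lam ≠ 0) (hu : lam ≠ uc) :
    IsUnit (Pinf uc lam).det := by
  have hz : (uc : ℂ) - lam ≠ 0 := sub_ne_zero.2 hu.symm
  have hc : (-lam) ^ ((1 : ℂ) / 4) ≠ 0 := by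
    simp [Complex.cpow_eq_zero_iff, h0]
  rw [isUnit_iff_ne_zero, Pinf, Matrix.det_smul, Matrix.det_mul]
  refine mul_ne_zero (pow_ne_zero _ hc) (mul_ne_zero ?_ ?_)
  · rw [Matrix.det_fin_two]
    simp [hz, Complex.cpow_eq_zero_iff]
  · rw [Matrix.det_fin_two]
    simp [← neg_add', ← two_mul]

lemma Pinf_conj_sigma1 {uc : ℝ} {lam : ℂ} (h0 : lam ≠ 0) (hu : lam ≠ uc) :
    Pinf uc lam * sigma1 * (Pinf uc lam)⁻¹ = sigma3 := by
  refine mul_mul_inv_eq_of_intertwine (isUnit_det_Pinf h0 hu) ?_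
  ext i j
  fin_cases i <;> fin_cases j <;>
    simp [Pinf, sigma1, sigma3, Matrix.mul_apply, Fin.sum_univ_two]

lemma Pinf_conj_sigma3 {uc : ℝ} {lam : ℂ} (h0 : lam ≠ 0) (hu : lam ≠ uc) :
    Pinf uc lam * sigma3 * (Pinf uc lam)⁻¹ =
      Matrix.of ![![0, -Complex.I * (((uc : ℂ) - lam) ^ (-(1 / 4) : ℂ)) ^ 2],
        ![Complex.I * (((uc : ℂ) - lam) ^ ((1 : ℂ) / 4)) ^ 2, 0]] := by
  refine mul_mul_inv_eq_of_intertwine (isUnit_det_Pinf h0 hu) ?_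
  have hab := cpow_neg_quarter_mul (sub_ne_zero.2 hu.symm)
  unfold Pinf sigma3
  generalize ((uc : ℂ) - lam) ^ (-(1 / 4) : ℂ) = a at *
  generalize ((uc : ℂ) - lam) ^ ((1 : ℂ) / 4) = b at *
  generalize (-lam) ^ ((1 : ℂ) / 4) = c at *
  have hI := Complex.I_mul_I
  ext i j
  fin_cases i <;> fin_cases j <;>
    simp [Matrix.mul_apply, Fin.sum_univ_two] <;> grind

lemma Delta1_eq {uc : ℝ} {f Q : ℂ → ℂ} {lam : ℂ} (h0 : lam ≠ 0) (hu : lam ≠ uc) :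
    Delta1 uc f Q lam = (Q lam * (-(f lam)) ^ (-(1 / 2) : ℂ)) •
      Matrix.of ![![0, (((uc : ℂ) - lam) ^ (-(1 / 4) : ℂ)) ^ 2],
        ![-(((uc : ℂ) - lam) ^ ((1 : ℂ) / 4)) ^ 2, 0]] := by
  rw [Delta1, Pinf_conj_sigma3 h0 hu]
  have hI := Complex.I_mul_I
  ext i j
  fin_cases i <;> fin_cases j <;> simp <;> grind

lemma Delta2_eq {uc : ℝ} {f Q U : ℂ → ℂ} {lam : ℂ} (h0 : lam ≠ 0) (hu : lam ≠ uc) :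
    Delta2 uc f Q U lam = (-(1 / 2 : ℂ) * (-(f lam))⁻¹) •
      (Q lam ^ 2 • (1 : Matrix (Fin 2) (Fin 2) ℂ) + U lam • sigma3) := by
  have hM : (Matrix.of ![![Q lam ^ 2, U lam], ![U lam, Q lam ^ 2]] : Matrix (Fin 2) (Fin 2) ℂ) =
      Q lam ^ 2 • (1 : Matrix (Fin 2) (Fin 2) ℂ) + U lam • sigma1 := by
    ext i j
    fin_cases i <;> fin_cases j <;> simp [sigma1]
  rw [Delta2, hM, Matrix.mul_add, Matrix.add_mul, Matrix.mul_smul, Matrix.smul_mul, Matrix.mul_one,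
    Matrix.mul_nonsing_inv _ (isUnit_det_Pinf h0 hu), Matrix.mul_smul, Matrix.smul_mul,
    Pinf_conj_sigma1 h0 hu]

/-- The product of `λ − u^c` with `R^{(1)}Δ^{(1)} + Δ^{(2)}`, where `g λ = f λ / (λ − u^c)`. -/
noncomputable def regularPart (uc : ℝ) (g Q U : ℂ → ℂ) (lam : ℂ) : Matrix (Fin 2) (Fin 2) ℂ :=
  Matrix.of
    ![![Q uc * g uc ^ (-(1 / 2) : ℂ) * Q lam * g lam ^ (-(1 / 2) : ℂ)
          + (U lam - Q lam ^ 2) / (2 * g lam), 0],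
      ![0, -(U lam + Q lam ^ 2) / (2 * g lam)]]

lemma R1_mul_Delta1_add_Delta2_eq {uc : ℝ} {f g Q U : ℂ → ℂ} {lam : ℂ} (h0 : lam ≠ 0)
    (hu : lam ≠ uc) (hfg : f lam = (lam - uc) * g lam) (hg : g lam ≠ 0)
    (hguc : g uc = deriv f uc)
    (hcpow : ∀ w : ℂ, (((uc : ℂ) - lam) * g lam) ^ w = ((uc : ℂ) - lam) ^ w * g lam ^ w) :
    R1 uc f Q lam * Delta1 uc f Q lam + Delta2 uc f Q U lam =
      (lam - (uc : ℂ))⁻¹ • regularPart uc g Q U lam := by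
  have hz : (uc : ℂ) - lam ≠ 0 := sub_ne_zero.2 hu.symm
  have hf : -(f lam) = ((uc : ℂ) - lam) * g lam := by
    rw [hfg]
    ring
  have ha : ((uc : ℂ) - lam) ^ (-(1 / 2) : ℂ) = (((uc : ℂ) - lam) ^ (-(1 / 4) : ℂ)) ^ 2 := by
    rw [sq, ← Complex.cpow_add _ _ hz]
    norm_num
  have hab := cpow_neg_quarter_mul hz
  have ha4 : ((((uc : ℂ) - lam) ^ (-(1 / 4) : ℂ)) ^ 4) * ((uc : ℂ) - lam) = 1 := by
    rw [← Complex.cpow_nat_mul]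
    norm_num [Complex.cpow_neg_one, hz]
  have hg2 : (g lam ^ (-(1 / 2) : ℂ)) ^ 2 * g lam = 1 := by
    rw [← Complex.cpow_nat_mul]
    norm_num [Complex.cpow_neg_one, hg]
  rw [R1, Delta2_eq h0 hu, Delta1_eq h0 hu, hf, hcpow, ha, ← hguc]
  unfold regularPart
  generalize ((uc : ℂ) - lam) ^ (-(1 / 4) : ℂ) = a at *
  generalize ((uc : ℂ) - lam) ^ ((1 : ℂ) / 4) = b at *
  generalize g lam ^ (-(1 / 2) : ℂ) = k at *
  generalize g uc ^ (-(1 / 2) : ℂ) = l at *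
  ext i j
  fin_cases i <;> fin_cases j <;> simp [E12, sigma3] <;> grind

lemma analyticOnNhd_regularPart {uc : ℝ} {g Q U : ℂ → ℂ} {V : Set ℂ} (hg : AnalyticOnNhd ℂ g V)
    (hQ : AnalyticOnNhd ℂ Q V) (hU : AnalyticOnNhd ℂ U V) (hpos : ∀ z ∈ V, 0 < (g z).re)
    (i j : Fin 2) : AnalyticOnNhd ℂ (fun lam => regularPart uc g Q U lam i j) V := by
  intro z hz
  have hgz : 2 * g z ≠ 0 := by
    refine mul_ne_zero two_ne_zero fun h => ?_
    simpa [h] using hpos z hz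
  have := hg z hz
  have := hQ z hz
  have := hU z hz
  have hslit : g z ∈ Complex.slitPlane := Or.inl (hpos z hz)
  fin_cases i <;> fin_cases j <;> simp [regularPart] <;>
    first | exact analyticAt_const | fun_prop (disch := assumption)

lemma regularPart_self {uc : ℝ} {g Q U : ℂ → ℂ} (hg : g uc ≠ 0) :
    regularPart uc g Q U uc = ((U uc + Q uc ^ 2) / (2 * g uc)) • sigma3 := by
  have hg2 : (g uc ^ (-(1 / 2) : ℂ)) ^ 2 * g uc = 1 := by
    rw [← Complex.cpow_nat_mul]
    norm_num [Complex.cpow_neg_one, hg]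
  ext i j
  fin_cases i <;> fin_cases j <;> simp [regularPart, sigma3] <;> grind

/-- `P^∞ σ₁ (P^∞)⁻¹ = σ₃`, and `R^{(1)}Δ^{(1)} + Δ^{(2)}` extends
meromorphically near `u^c` with at most a simple pole there, with residue
`((U(u^c) + Q(u^c)²)/(2 f'(u^c))) σ₃`. -/
theorem R1Delta1_plus_Delta2_residue
    (uc : ℝ) (huc : uc < 0)
    (𝒰 : Set ℂ) (hUopen : IsOpen 𝒰) (hUmem : (uc : ℂ) ∈ 𝒰)
    (f Q U : ℂ → ℂ)
    (hf : AnalyticOnNhd ℂ f 𝒰) (hQ : AnalyticOnNhd ℂ Q 𝒰) (hU : AnalyticOnNhd ℂ U 𝒰)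
    (hfreal : ∀ x : ℝ, (x : ℂ) ∈ 𝒰 → (f (x : ℂ)).im = 0)
    (hf0 : f (uc : ℂ) = 0)
    (hf'im : (deriv f (uc : ℂ)).im = 0) (hf'pos : 0 < (deriv f (uc : ℂ)).re) :
    (∀ lam : ℂ, (lam.im ≠ 0 ∨ lam.re < uc) →
      Pinf uc lam * sigma1 * (Pinf uc lam)⁻¹ = sigma3) ∧
    ∃ V : Set ℂ, IsOpen V ∧ (uc : ℂ) ∈ V ∧ V ⊆ 𝒰 ∧
      ∃ H : ℂ → Matrix (Fin 2) (Fin 2) ℂ,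
        (∀ i j : Fin 2, AnalyticOnNhd ℂ (fun lam => H lam i j) V) ∧
        ∀ lam ∈ V, (lam.im ≠ 0 ∨ lam.re < uc) → lam ≠ (uc : ℂ) →
          R1 uc f Q lam * Delta1 uc f Q lam + Delta2 uc f Q U lam =
            (lam - (uc : ℂ))⁻¹ •
              (((U (uc : ℂ) + Q (uc : ℂ) ^ 2) / (2 * deriv f (uc : ℂ))) • sigma3)
            + H lam := by
  have hne : ∀ lam : ℂ, (lam.im ≠ 0 ∨ lam.re < uc) → lam ≠ 0 ∧ lam ≠ uc := by
    refine fun lam h => ⟨?_, ?_⟩ <;> rintro rfl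
    · simp [huc.not_gt] at h
    · simp at h
  refine ⟨fun lam h => Pinf_conj_sigma1 (hne lam h).1 (hne lam h).2, ?_⟩
  set g := dslope f (uc : ℂ)
  have hguc : g uc = deriv f uc := dslope_same f _
  have hUn : 𝒰 ∈ 𝓝 (uc : ℂ) := hUopen.mem_nhds hUmem
  have hgan : AnalyticOnNhd ℂ g 𝒰 :=
    ((Complex.differentiableOn_dslope hUn).2 hf.differentiableOn).analyticOnNhd hUopen
  have hfg : ∀ lam, f lam = (lam - uc) * g lam := fun lam => by
    simpa [hf0] using (sub_smul_dslope f (uc : ℂ) lam).symm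
  have hgpos : ∀ᶠ z in 𝓝 (uc : ℂ), 0 < (g z).re :=
    (Complex.continuous_re.continuousAt.comp (hgan _ hUmem).continuousAt).eventually_const_lt
      (by simpa [hguc] using hf'pos)
  have hret : Tendsto (fun z : ℂ => ((z.re : ℝ) : ℂ)) (𝓝 (uc : ℂ)) (𝓝 (uc : ℂ)) := by
    have hc : Continuous fun z : ℂ => ((z.re : ℝ) : ℂ) := by fun_prop
    simpa using hc.tendsto (uc : ℂ)
  have hreal : ∀ᶠ z : ℂ in 𝓝 (uc : ℂ), (f (z.re : ℂ)).im = 0 := by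
    filter_upwards [hret.eventually hUn] with z hz using hfreal _ hz
  have hsign := eventually_im_sign_of_real (hf _ hUmem) hreal hf'im hf'pos
  obtain ⟨V, hV, hVo, hVmem⟩ := eventually_nhds_iff.1 (hgpos.and (hsign.and hUn))
  have hVU : V ⊆ 𝒰 := fun z hz => (hV z hz).2.2
  refine ⟨V, hVo, hVmem, hVU,
    fun lam => Matrix.of fun i j => dslope (fun z => regularPart uc g Q U z i j) (uc : ℂ) lam,
    fun i j => ?_, fun lam hlam hcut hu => ?_⟩
  · have han := analyticOnNhd_regularPart (uc := uc) (hgan.mono hVU) (hQ.mono hVU) (hU.mono hVU)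
      (fun z hz => (hV z hz).1) i j
    exact ((Complex.differentiableOn_dslope (hVo.mem_nhds hVmem)).2
      han.differentiableOn).analyticOnNhd hVo
  · have hg0 : ∀ z ∈ V, g z ≠ 0 := fun z hz h => by simpa [h] using (hV z hz).1
    have hcpow : ∀ w : ℂ,
        (((uc : ℂ) - lam) * g lam) ^ w = ((uc : ℂ) - lam) ^ w * g lam ^ w := by
      have hmul : ((uc : ℂ) - lam) * g lam = -(f lam) := by
        rw [hfg]
        ring
      refine mul_cpow_of_im_sign ?_ (hV lam hlam).1 ?_ ?_
      · rcases hcut with h | h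
        · exact Or.inr (by simpa using h)
        · exact Or.inl (by simpa using h)
      · simpa [hmul] using (hV lam hlam).2.1.2
      · simpa [hmul] using (hV lam hlam).2.1.1
    rw [R1_mul_Delta1_add_Delta2_eq (hne lam hcut).1 hu (hfg lam) (hg0 lam hlam) hguc hcpow,
      ← hguc, ← regularPart_self (hg0 _ hVmem)]
    ext i j
    simp only [Matrix.add_apply, Matrix.smul_apply, Matrix.of_apply, dslope_of_ne _ hu, slope,
      vsub_eq_sub, smul_eq_mul]
    ring
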